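/- arXiv:2403.19955 — 9 statements merged into one kernel-verified Lean document; each statement's English description precedes it below -/
import Mathlib

section
/- (Theorem 1) Let K ≤ τ be positive integers and P_1, …, P_K > 0. For every K×τ complex matrix X whose k-th row x_k satisfies ‖x_k‖² ≤ P_k for all k, and such that X X^H is invertible, it holds that Tr[(X X^H)^{-1}] ≥ Σ_{k=1}^K 1/P_k. Equality holds if and only if X X^H = diag{P_1, …, P_K}. -/
open Matrix

/-- Theorem 1: under per-row power constraints `‖x_k‖² ≤ P_k`, the trace of the
inverse of `X Xᴴ` is at least `∑ 1/P_k`, with equality iff `X Xᴴ = diag(P)`. -/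
theorem stmt1 (K τ : ℕ) (hK : 0 < K) (hKτ : K ≤ τ)
    (P : Fin K → ℝ) (hP : ∀ k, 0 < P k)
    (X : Matrix (Fin K) (Fin τ) ℂ)
    (hpow : ∀ k, ∑ j, ‖X k j‖ ^ 2 ≤ P k)
    (hX : IsUnit (X * Xᴴ)) :
    (∑ k, (P k)⁻¹) ≤ (((X * Xᴴ)⁻¹).trace).re ∧
      ((((X * Xᴴ)⁻¹).trace).re = ∑ k, (P k)⁻¹ ↔
        X * Xᴴ = Matrix.diagonal fun k => (P k : ℂ)) := by
  have hdiag : ∀ k, (X * Xᴴ) k k = ((∑ j, ‖X k j‖ ^ 2 : ℝ) : ℂ) := by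
    intro k
    simp [Matrix.mul_apply, Complex.mul_conj']
  have hdet : IsUnit (X * Xᴴ).det := (Matrix.isUnit_iff_isUnit_det _).1 hX
  have hGH : (X * Xᴴ)ᴴ = X * Xᴴ := by simp
  have hDH : (Matrix.diagonal fun k => ((P k)⁻¹ : ℂ))ᴴ
      = Matrix.diagonal fun k => ((P k)⁻¹ : ℂ) := by
    rw [Matrix.diagonal_conjTranspose]
    congr 1
    ext k
    simp
  have hDP : (Matrix.diagonal fun k => ((P k)⁻¹ : ℂ)) * (Matrix.diagonal fun k => (P k : ℂ)) = 1 := by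
    rw [Matrix.diagonal_mul_diagonal, ← Matrix.diagonal_one]
    congr 1
    ext k
    have : (P k : ℂ) ≠ 0 := by exact_mod_cast (hP k).ne'
    simp [this]
  have htD : (Matrix.diagonal fun k => ((P k)⁻¹ : ℂ)).trace = ((∑ k, (P k)⁻¹ : ℝ) : ℂ) := by
    simp [Matrix.trace_diagonal]
  have htDGD : ((Matrix.diagonal fun k => ((P k)⁻¹ : ℂ)) * (X * Xᴴ) *
      (Matrix.diagonal fun k => ((P k)⁻¹ : ℂ))).trace
      = ((∑ k, (P k)⁻¹ * (∑ j, ‖X k j‖ ^ 2) * (P k)⁻¹ : ℝ) : ℂ) := by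
    rw [Matrix.trace, Complex.ofReal_sum]
    refine Finset.sum_congr rfl fun k _ => ?_
    rw [Matrix.diag_apply, Matrix.mul_diagonal, Matrix.diagonal_mul, hdiag]
    push_cast
    rfl
  have hle : ∑ k, (P k)⁻¹ * (∑ j, ‖X k j‖ ^ 2) * (P k)⁻¹ ≤ ∑ k, (P k)⁻¹ := by
    refine Finset.sum_le_sum fun k _ => ?_
    have h0 := hP k
    have h1 : 0 ≤ (P k)⁻¹ := (inv_pos.2 h0).le
    calc (P k)⁻¹ * (∑ j, ‖X k j‖ ^ 2) * (P k)⁻¹ ≤ (P k)⁻¹ * P k * (P k)⁻¹ := by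
          gcongr
          exact hpow k
      _ = (P k)⁻¹ := by field_simp
  generalize (Matrix.diagonal fun k => ((P k)⁻¹ : ℂ)) = D at *
  obtain ⟨W, hW⟩ : ∃ W, W = Xᴴ * ((X * Xᴴ)⁻¹ - D) := ⟨_, rfl⟩
  have hXW : X * W = 1 - X * Xᴴ * D := by
    rw [hW, ← Matrix.mul_assoc, Matrix.mul_sub, Matrix.mul_nonsing_inv _ hdet]
  have hWW : Wᴴ * W = (X * Xᴴ)⁻¹ - D - D + D * (X * Xᴴ) * D := by
    have : Wᴴ = ((X * Xᴴ)⁻¹ - D) * X := by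
      rw [hW, Matrix.conjTranspose_mul, Matrix.conjTranspose_sub, hDH,
        Matrix.conjTranspose_nonsing_inv, hGH, Matrix.conjTranspose_conjTranspose]
    rw [this, Matrix.mul_assoc, hXW, Matrix.mul_sub, Matrix.mul_one, ← Matrix.mul_assoc,
      Matrix.sub_mul, Matrix.sub_mul, Matrix.nonsing_inv_mul _ hdet, Matrix.one_mul]
    abel
  have htr := congrArg Matrix.trace hWW
  rw [Matrix.trace_add, Matrix.trace_sub, Matrix.trace_sub, htD, htDGD] at htr
  have hre := congrArg Complex.re htr
  simp only [Complex.add_re, Complex.sub_re, Complex.ofReal_re] at hre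
  have hnn : (Wᴴ * W).trace = ((∑ k, ∑ j, ‖W j k‖ ^ 2 : ℝ) : ℂ) := by
    simp [Matrix.trace, Matrix.mul_apply, Complex.conj_mul']
  have hnn0 : 0 ≤ ∑ k, ∑ j, ‖W j k‖ ^ 2 := by positivity
  have hnnr : (Wᴴ * W).trace.re = ∑ k, ∑ j, ‖W j k‖ ^ 2 := by rw [hnn, Complex.ofReal_re]
  refine ⟨by linarith, fun h => ?_, fun h => ?_⟩
  · have h0 : ∑ k, ∑ j, ‖W j k‖ ^ 2 = 0 := by linarith
    have hW0 : W = 0 := by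
      ext j k
      rw [Finset.sum_eq_zero_iff_of_nonneg (fun _ _ => by positivity)] at h0
      have h1 := h0 k (Finset.mem_univ _)
      rw [Finset.sum_eq_zero_iff_of_nonneg (fun _ _ => by positivity)] at h1
      simpa using h1 j (Finset.mem_univ _)
    rw [hW0, Matrix.mul_zero] at hXW
    have h2 : X * Xᴴ * D = 1 := (sub_eq_zero.1 hXW.symm).symm
    rw [← Matrix.mul_one (X * Xᴴ), ← hDP, ← Matrix.mul_assoc, h2, Matrix.one_mul]
  · rw [h, Matrix.inv_eq_left_inv hDP, htD, Complex.ofReal_re]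
end

section
/- (Proposition 1) Let V and V_0 be (M+1)×B complex matrices such that V V^H and V_0 V_0^H are invertible, and suppose Tr[(V V^H)^{-1}] ≤ Tr[(V_0 V_0^H)^{-1}]. Define λ_1 = 3 (Tr[(V_0 V_0^H)^{-1}])², A_0 = − V_0^H (V_0 V_0^H)^{-2} − λ_1 V_0^H, and Const(V_0) = Tr[(V_0 V_0^H)^{-1}] + λ_1 Tr[V_0 V_0^H] + 2 Tr[V_0^H (V_0 V_0^H)^{-2} V_0]. Then Tr[(V V^H)^{-1}] ≤ λ_1 Tr[V V^H] + 2 Re{Tr[A_0 V]} + Const(V_0). -/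
open Matrix

attribute [local instance] Matrix.frobeniusNormedAddCommGroup Matrix.frobeniusNormedSpace

theorem frobSq {m n : ℕ} (A : Matrix (Fin m) (Fin n) ℂ) :
    ‖A‖ ^ 2 = ((A * Aᴴ).trace).re := by
  have h : ‖A‖ = Real.sqrt (∑ i, ∑ j, ‖A i j‖ ^ 2) := by
    rw [Matrix.frobenius_norm_def, Real.sqrt_eq_rpow]
    simp
  rw [h, Real.sq_sqrt (by positivity)]
  simp only [Matrix.trace, Matrix.diag, Matrix.mul_apply, Complex.re_sum, conjTranspose_apply]
  refine Finset.sum_congr rfl fun i _ => Finset.sum_congr rfl fun j _ => ?_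
  rw [← Complex.normSq_eq_norm_sq, Complex.normSq_apply]
  simp

theorem reTrConj {m : ℕ} (A : Matrix (Fin m) (Fin m) ℂ) :
    ((Aᴴ).trace).re = (A.trace).re := by
  rw [Matrix.trace_conjTranspose]; simp

theorem frobSqSub {m n : ℕ} (A C : Matrix (Fin m) (Fin n) ℂ) :
    ‖A - C‖ ^ 2 = ‖A‖ ^ 2 - 2 * ((A * Cᴴ).trace).re + ‖C‖ ^ 2 := by
  have h := reTrConj (A * Cᴴ)
  rw [conjTranspose_mul, conjTranspose_conjTranspose] at h
  simp only [frobSq, conjTranspose_sub, Matrix.sub_mul, Matrix.mul_sub, Matrix.trace_sub,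
    Complex.sub_re]
  linarith

theorem projLe {m n : ℕ} (Q : Matrix (Fin m) (Fin m) ℂ) (hQ : Qᴴ = Q) (hQQ : Q * Q = Q)
    (Z : Matrix (Fin m) (Fin n) ℂ) : ‖Q * Z‖ ≤ ‖Z‖ := by
  have h := frobSqSub Z (Q * Z)
  have e : ((Z * (Q * Z)ᴴ).trace) = ((Q * Z * (Q * Z)ᴴ).trace) := by
    rw [conjTranspose_mul, hQ, Matrix.mul_assoc Q, Matrix.trace_mul_comm Q]
    simp only [Matrix.mul_assoc, hQQ]
  rw [e, ← frobSq] at h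
  have h2 : ‖Q * Z‖ ^ 2 ≤ ‖Z‖ ^ 2 := by nlinarith [sq_nonneg ‖Z - Q * Z‖]
  exact (sq_le_sq₀ (norm_nonneg _) (norm_nonneg _)).1 h2

set_option maxHeartbeats 1600000 in
/-- Proposition 1: the MM surrogate upper bound for the LS objective
`f(V) = Tr[(V Vᴴ)⁻¹]` around the previous iterate `V₀`. -/
theorem stmt3 (M B : ℕ) (V V0 : Matrix (Fin (M + 1)) (Fin B) ℂ)
    (hV : IsUnit (V * Vᴴ)) (hV0 : IsUnit (V0 * V0ᴴ))
    (hle : (((V * Vᴴ)⁻¹).trace).re ≤ (((V0 * V0ᴴ)⁻¹).trace).re)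
    (lam1 : ℝ) (hlam : lam1 = 3 * ((((V0 * V0ᴴ)⁻¹).trace).re) ^ 2)
    (A0 : Matrix (Fin B) (Fin (M + 1)) ℂ)
    (hA0 : A0 = -(V0ᴴ * ((V0 * V0ᴴ)⁻¹ * (V0 * V0ᴴ)⁻¹)) - (lam1 : ℂ) • V0ᴴ)
    (C : ℝ)
    (hC : C = (((V0 * V0ᴴ)⁻¹).trace).re + lam1 * ((V0 * V0ᴴ).trace).re +
        2 * ((V0ᴴ * ((V0 * V0ᴴ)⁻¹ * (V0 * V0ᴴ)⁻¹) * V0).trace).re) :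
    (((V * Vᴴ)⁻¹).trace).re ≤
      lam1 * ((V * Vᴴ).trace).re + 2 * ((A0 * V).trace).re + C := by
  have hu := (Matrix.isUnit_iff_isUnit_det _).1 hV
  have hu0 := (Matrix.isUnit_iff_isUnit_det _).1 hV0
  have hPH : ((V * Vᴴ)⁻¹)ᴴ = (V * Vᴴ)⁻¹ := by
    rw [Matrix.conjTranspose_nonsing_inv, conjTranspose_mul, conjTranspose_conjTranspose]
  have hPH0 : ((V0 * V0ᴴ)⁻¹)ᴴ = (V0 * V0ᴴ)⁻¹ := by
    rw [Matrix.conjTranspose_nonsing_inv, conjTranspose_mul, conjTranspose_conjTranspose]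
  have h1 := Matrix.nonsing_inv_mul _ hu
  have h2 := Matrix.mul_nonsing_inv _ hu
  have h3 := Matrix.nonsing_inv_mul _ hu0
  have h4 := Matrix.mul_nonsing_inv _ hu0
  generalize (V * Vᴴ)⁻¹ = P at *
  generalize (V0 * V0ᴴ)⁻¹ = P0 at *
  have nX : ‖Vᴴ * P‖ ^ 2 = (P.trace).re := by
    rw [frobSq, Matrix.trace_mul_comm, conjTranspose_mul, conjTranspose_conjTranspose, hPH,
      Matrix.mul_assoc, ← Matrix.mul_assoc V, ← Matrix.mul_assoc, h1, Matrix.one_mul]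
  have nY : ‖V0ᴴ * P0‖ ^ 2 = (P0.trace).re := by
    rw [frobSq, Matrix.trace_mul_comm, conjTranspose_mul, conjTranspose_conjTranspose, hPH0,
      Matrix.mul_assoc, ← Matrix.mul_assoc V0, ← Matrix.mul_assoc, h3, Matrix.one_mul]
  have hP0 : P0 = (V0ᴴ * P0)ᴴ * (V0ᴴ * P0) := by
    rw [conjTranspose_mul, conjTranspose_conjTranspose, hPH0,
      Matrix.mul_assoc, ← Matrix.mul_assoc V0, ← Matrix.mul_assoc, h3, Matrix.one_mul]
  have nP0 : ‖P0‖ ≤ (P0.trace).re := by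
    calc ‖P0‖ = ‖(V0ᴴ * P0)ᴴ * (V0ᴴ * P0)‖ := by rw [← hP0]
      _ ≤ ‖(V0ᴴ * P0)ᴴ‖ * ‖V0ᴴ * P0‖ := Matrix.frobenius_norm_mul _ _
      _ = (P0.trace).re := by rw [Matrix.frobenius_norm_conjTranspose, ← nY, sq]
  -- the residual term
  have hsplit : Vᴴ * P * (V * Vᴴ - V0 * V0ᴴ) * P0 =
      (Vᴴ * P * V) * ((V - V0)ᴴ * P0) + (Vᴴ * P) * (V - V0) * (V0ᴴ * P0) := by
    simp only [conjTranspose_sub, Matrix.sub_mul, Matrix.mul_sub, Matrix.mul_assoc]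
    abel
  have hproj : ‖(Vᴴ * P * V) * ((V - V0)ᴴ * P0)‖ ≤ ‖(V - V0)ᴴ * P0‖ := by
    apply projLe
    · simp only [conjTranspose_mul, conjTranspose_conjTranspose, hPH, Matrix.mul_assoc]
    · calc Vᴴ * P * V * (Vᴴ * P * V) = Vᴴ * (P * (V * Vᴴ)) * P * V := by
            simp only [Matrix.mul_assoc]
        _ = Vᴴ * P * V := by rw [h1, Matrix.mul_one]
  have hal : ‖(V - V0)ᴴ * P0‖ ≤ (P0.trace).re * ‖V - V0‖ := by
    calc _ ≤ ‖(V - V0)ᴴ‖ * ‖P0‖ := Matrix.frobenius_norm_mul _ _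
      _ ≤ ‖V - V0‖ * (P0.trace).re := by
        rw [Matrix.frobenius_norm_conjTranspose]; gcongr
      _ = _ := mul_comm _ _
  have hXY : ‖Vᴴ * P‖ * ‖V0ᴴ * P0‖ ≤ (P0.trace).re := by
    nlinarith [sq_nonneg (‖Vᴴ * P‖ - ‖V0ᴴ * P0‖)]
  have hbe : ‖(Vᴴ * P) * (V - V0) * (V0ᴴ * P0)‖ ≤ (P0.trace).re * ‖V - V0‖ := by
    calc _ ≤ ‖(Vᴴ * P) * (V - V0)‖ * ‖V0ᴴ * P0‖ := Matrix.frobenius_norm_mul _ _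
      _ ≤ (‖Vᴴ * P‖ * ‖V - V0‖) * ‖V0ᴴ * P0‖ := by
        gcongr; exact Matrix.frobenius_norm_mul _ _
      _ = (‖Vᴴ * P‖ * ‖V0ᴴ * P0‖) * ‖V - V0‖ := by ring
      _ ≤ _ := by gcongr
  have hres : ‖Vᴴ * P * (V * Vᴴ - V0 * V0ᴴ) * P0‖ ≤
      ‖(V - V0)ᴴ * P0‖ + (P0.trace).re * ‖V - V0‖ := by
    rw [hsplit]
    exact (norm_add_le _ _).trans (add_le_add hproj hbe)
  have hmain : ‖Vᴴ * P * (V * Vᴴ - V0 * V0ᴴ) * P0‖ ^ 2 - ‖(V - V0)ᴴ * P0‖ ^ 2 ≤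
      lam1 * ‖V - V0‖ ^ 2 := by
    have n1 := norm_nonneg (Vᴴ * P * (V * Vᴴ - V0 * V0ᴴ) * P0)
    have n2 := norm_nonneg ((V - V0)ᴴ * P0)
    have n3 : 0 ≤ (P0.trace).re * ‖V - V0‖ := n2.trans hal
    have h5 := pow_le_pow_left₀ n1 hres 2
    rw [hlam]
    nlinarith [mul_le_mul_of_nonneg_right hal n3]
  -- trace identities
  have hid : ‖Vᴴ * P * (V * Vᴴ - V0 * V0ᴴ) * P0‖ ^ 2 =
      (P.trace).re - 2 * (P0.trace).re + ‖Vᴴ * P0‖ ^ 2 := by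
    have e1 : Vᴴ * P * (V * Vᴴ - V0 * V0ᴴ) * P0 = Vᴴ * P0 - Vᴴ * P := by
      calc _ = Vᴴ * ((P * (V * Vᴴ)) * P0) - Vᴴ * (P * ((V0 * V0ᴴ) * P0)) := by
            simp only [Matrix.sub_mul, Matrix.mul_sub, Matrix.mul_assoc]
        _ = _ := by rw [h1, h4, Matrix.one_mul, Matrix.mul_one]
    have e2 : ((Vᴴ * P0 * (Vᴴ * P)ᴴ).trace) = P0.trace := by
      rw [Matrix.trace_mul_comm, conjTranspose_mul, conjTranspose_conjTranspose, hPH,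
        Matrix.mul_assoc, ← Matrix.mul_assoc V, ← Matrix.mul_assoc, h1, Matrix.one_mul]
    rw [e1, frobSqSub, e2, nX]; ring
  have hid2 : ‖(V - V0)ᴴ * P0‖ ^ 2 = ‖Vᴴ * P0‖ ^ 2
      - 2 * ((V0ᴴ * (P0 * P0) * V).trace).re + (P0.trace).re := by
    have e : ((Vᴴ * P0 * (V0ᴴ * P0)ᴴ).trace).re = ((V0ᴴ * (P0 * P0) * V).trace).re := by
      rw [← reTrConj]
      simp only [conjTranspose_mul, conjTranspose_conjTranspose, hPH0, Matrix.mul_assoc]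
    rw [conjTranspose_sub, Matrix.sub_mul, frobSqSub, e, nY]
  have hid3 : ‖V - V0‖ ^ 2 = ((V * Vᴴ).trace).re - 2 * ((V0ᴴ * V).trace).re
      + ((V0 * V0ᴴ).trace).re := by
    rw [frobSqSub, frobSq, frobSq, Matrix.trace_mul_comm V V0ᴴ]
  have hid4 : ((V0ᴴ * (P0 * P0) * V0).trace).re = (P0.trace).re := by
    rw [← nY, frobSq]
    simp only [conjTranspose_mul, conjTranspose_conjTranspose, hPH0, Matrix.mul_assoc]
  have hid5 : ((A0 * V).trace).re = -((V0ᴴ * (P0 * P0) * V).trace).re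
      - lam1 * ((V0ᴴ * V).trace).re := by
    rw [hA0]
    simp [Matrix.sub_mul]
  rw [hid, hid2, hid3] at hmain
  rw [hC, hid4, hid5]
  nlinarith [hmain]
end

section
/- Let V be an (M+1)×B complex matrix with full row rank, so that W = V V^H is Hermitian positive definite. Define the B(M+1) × B(M+1) matrix P = (V^T (W^{-2})^T V^*) ⊗ W^{-1} + (V^T (W^{-1})^T V^*) ⊗ W^{-2} − I_B ⊗ W^{-2}, where V^* is the entrywise complex conjugate of V. Then P is Hermitian and its largest eigenvalue satisfies λ_max(P) ≤ (λ_max(W^{-1}))². -/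
open Matrix Kronecker
open scoped ComplexOrder

/-- The largest eigenvalue of a Hermitian matrix. -/
noncomputable def lamMax {n : Type*} [Fintype n] [DecidableEq n]
    {A : Matrix n n ℂ} (hA : A.IsHermitian) : ℝ :=
  ⨆ i, hA.eigenvalues i

theorem aux_le {n : Type*} [Fintype n] [DecidableEq n] {A : Matrix n n ℂ} (hA : A.IsHermitian)
    (c : ℝ) (h : ∀ i, hA.eigenvalues i ≤ c) : ((c : ℂ) • (1 : Matrix n n ℂ) - A).PosSemidef := by
  have hd : (Matrix.diagonal (fun i => ((c - hA.eigenvalues i : ℝ) : ℂ))).PosSemidef := by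
    refine Matrix.PosSemidef.diagonal ?_
    intro i
    simpa using h i
  have h2 := hd.mul_mul_conjTranspose_same (hA.eigenvectorUnitary : Matrix n n ℂ)
  convert h2 using 1
  have hs := hA.spectral_theorem
  rw [Unitary.conjStarAlgAut_apply] at hs
  have hu : (hA.eigenvectorUnitary : Matrix n n ℂ) * (hA.eigenvectorUnitary : Matrix n n ℂ)ᴴ = 1 := by
    rw [← Matrix.star_eq_conjTranspose]
    exact Unitary.coe_mul_star_self _
  have hdd : Matrix.diagonal (fun i => ((c - hA.eigenvalues i : ℝ) : ℂ))
      = (c : ℂ) • (1 : Matrix n n ℂ) - Matrix.diagonal (RCLike.ofReal ∘ hA.eigenvalues) := by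
    ext i j
    by_cases hij : i = j
    · subst hij; simp
    · simp [hij]
  rw [hdd, Matrix.mul_sub, Matrix.sub_mul, Matrix.mul_smul, Matrix.smul_mul, Matrix.mul_one, hu]
  congr 1

theorem aux_ge {n : Type*} [Fintype n] [DecidableEq n] {A : Matrix n n ℂ} (hA : A.IsHermitian)
    (c : ℝ) (h : ((c : ℂ) • (1 : Matrix n n ℂ) - A).PosSemidef) (i : n) :
    hA.eigenvalues i ≤ c := by
  have h1 := h.dotProduct_mulVec_nonneg (hA.eigenvectorBasis i).ofLp
  have h3 : star (hA.eigenvectorBasis i).ofLp ⬝ᵥ (hA.eigenvectorBasis i).ofLp = 1 := by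
    have := hA.eigenvectorBasis.orthonormal.1 i
    rw [dotProduct_comm, ← EuclideanSpace.inner_eq_star_dotProduct, inner_self_eq_norm_sq_to_K, this]
    simp
  rw [Matrix.sub_mulVec, Matrix.smul_mulVec, Matrix.one_mulVec, hA.mulVec_eigenvectorBasis,
    dotProduct_sub, dotProduct_smul, dotProduct_smul, h3] at h1
  simpa using (Complex.le_def.mp h1).1

theorem stmt4 (M B : ℕ) (V : Matrix (Fin (M + 1)) (Fin B) ℂ)
    (hV : V.rank = M + 1)
    (W : Matrix (Fin (M + 1)) (Fin (M + 1)) ℂ) (hW : W = V * Vᴴ)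
    (P : Matrix (Fin B × Fin (M + 1)) (Fin B × Fin (M + 1)) ℂ)
    (hP : P = (Vᵀ * (W⁻¹ * W⁻¹)ᵀ * V.map (starRingEnd ℂ)) ⊗ₖ W⁻¹
        + (Vᵀ * (W⁻¹)ᵀ * V.map (starRingEnd ℂ)) ⊗ₖ (W⁻¹ * W⁻¹)
        - (1 : Matrix (Fin B) (Fin B) ℂ) ⊗ₖ (W⁻¹ * W⁻¹)) :
    W.PosDef ∧
      ∃ (hPh : P.IsHermitian) (hWi : (W⁻¹).IsHermitian),
        lamMax hPh ≤ (lamMax hWi) ^ 2 := by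
  have hWs : W.PosSemidef := by rw [hW]; exact Matrix.posSemidef_self_mul_conjTranspose V
  have hWr : W.rank = M + 1 := by rw [hW, Matrix.rank_self_mul_conjTranspose, hV]
  have hWu : IsUnit W := by
    rw [← Matrix.mulVec_surjective_iff_isUnit]
    have : LinearMap.range W.mulVecLin = ⊤ := by
      apply Submodule.eq_top_of_finrank_eq
      rw [← Matrix.rank, hWr]; simp
    exact LinearMap.range_eq_top.mp this
  have hWp : W.PosDef := hWs.posDef_iff_isUnit.mpr hWu
  have hdet : IsUnit W.det := (Matrix.isUnit_iff_isUnit_det W).mp hWu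
  have hAp : (W⁻¹).PosDef := hWp.inv
  have hWA : W * W⁻¹ = 1 := Matrix.mul_nonsing_inv _ hdet
  have hAW : W⁻¹ * W = 1 := Matrix.nonsing_inv_mul _ hdet
  refine ⟨hWp, ?_⟩
  have hA : (W⁻¹).IsHermitian := hAp.1
  obtain ⟨c, hc⟩ : ∃ c, c = lamMax hA := ⟨_, rfl⟩
  have hle : ∀ i, hA.eigenvalues i ≤ c := fun i => by
    rw [hc]; exact le_ciSup (Set.finite_range _).bddAbove i
  have hc0 : 0 < c := (hAp.eigenvalues_pos 0).trans_le (hle 0)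
  have hcA := aux_le hA c hle
  have hmap : V.map (starRingEnd ℂ) = (Vᵀ)ᴴ := by ext i j; simp
  have hCC : (Vᵀ)ᴴ * Vᵀ = Wᵀ := by rw [hW, Matrix.transpose_mul]; rfl
  rw [hmap] at hP
  generalize W⁻¹ = A at *
  have hAs := hAp.posSemidef
  generalize Vᵀ = C at *
  have hc0' : (0 : ℂ) < c := by exact_mod_cast hc0
  have hcA2 : ((c : ℂ) • A - A * A).PosSemidef := by
    have h1 := hcA.mul_mul_conjTranspose_same A
    have h2 := hAs.mul_mul_conjTranspose_same ((c : ℂ) • (1 : Matrix _ _ ℂ) - A)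
    rw [hA.eq] at h1
    rw [hcA.1.eq] at h2
    have h3 := (h1.add h2).smul (inv_pos.mpr hc0').le
    convert h3 using 1
    rw [eq_inv_smul_iff₀ hc0'.ne']
    simp only [Matrix.mul_sub, Matrix.sub_mul, Matrix.mul_smul, Matrix.smul_mul, Matrix.mul_one,
      Matrix.one_mul, smul_sub]
    abel
  set Q := C * Aᵀ * Cᴴ with hQ
  set R := C * (A * A)ᵀ * Cᴴ with hR
  have hQs : Q.PosSemidef := hAs.transpose.mul_mul_conjTranspose_same C
  have hAA : (A * A).PosSemidef := by
    have := Matrix.posSemidef_self_mul_conjTranspose A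
    rwa [hA.eq] at this
  have hRs : R.PosSemidef := hAA.transpose.mul_mul_conjTranspose_same C
  have hQQ : Q * Q = Q := by
    calc Q * Q = C * (Aᵀ * (Cᴴ * C) * Aᵀ) * Cᴴ := by simp only [hQ, Matrix.mul_assoc]
      _ = Q := by rw [hCC, ← Matrix.transpose_mul, hWA, Matrix.transpose_one, Matrix.one_mul]
  have hQ1 : (1 - Q).PosSemidef := by
    have := Matrix.posSemidef_self_mul_conjTranspose (1 - Q)
    rw [Matrix.conjTranspose_sub, Matrix.conjTranspose_one, hQs.1.eq] at this
    convert this using 1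
    simp [Matrix.mul_sub, Matrix.sub_mul, hQQ]
  have hcR : ((c : ℂ) • (1 : Matrix _ _ ℂ) - R).PosSemidef := by
    have h1 := hcA2.transpose.mul_mul_conjTranspose_same C
    have h2 := (hQ1.smul hc0'.le).add h1
    convert h2 using 1
    rw [Matrix.transpose_sub, Matrix.transpose_smul, Matrix.mul_sub, Matrix.sub_mul,
      Matrix.mul_smul, Matrix.smul_mul, smul_sub]
    abel
  have hPh : P.IsHermitian := by
    rw [hP]
    exact ((hRs.kronecker hAs).1.add (hQs.kronecker hAA).1).sub
      (Matrix.PosSemidef.one.kronecker hAA).1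
  refine ⟨hPh, hA, ?_⟩
  rw [← hc]
  have hfin : (((c ^ 2 : ℝ) : ℂ) • (1 : Matrix _ _ ℂ) - P).PosSemidef := by
    have h1 := hcR.kronecker hAs
    have h2 := ((Matrix.PosSemidef.one (n := Fin B) (R := ℂ)).kronecker hcA).smul hc0'.le
    have h3 := hQ1.kronecker hAA
    have he : ((c ^ 2 : ℝ) : ℂ) • (1 : Matrix (Fin B × Fin (M + 1)) (Fin B × Fin (M + 1)) ℂ) - P
        = ((c : ℂ) • (1 : Matrix _ _ ℂ) - R) ⊗ₖ A
          + (c : ℂ) • ((1 : Matrix _ _ ℂ) ⊗ₖ ((c : ℂ) • (1 : Matrix _ _ ℂ) - A))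
          + (1 - Q) ⊗ₖ (A * A) := by
      rw [hP]
      ext ⟨i, k⟩ ⟨j, l⟩
      simp only [Matrix.sub_apply, Matrix.add_apply, Matrix.smul_apply, Matrix.kroneckerMap_apply,
        smul_eq_mul, ← Matrix.one_kronecker_one (α := ℂ) (m := Fin B) (n := Fin (M + 1))]
      push_cast
      ring
    rw [he]
    exact (h1.add h2).add h3
  exact Real.iSup_le (aux_ge hPh _ hfin) (sq_nonneg c)
end

section
/- Let V be an (M+1)×B complex matrix with full row rank, so that W = V V^H is Hermitian positive definite. Define the B(M+1) × B(M+1) matrix Q = ((W^{-2})^T V^*) ⊗ (V^H W^{-1}) + ((W^{-1})^T V^*) ⊗ (V^H W^{-2}), where V^* is the entrywise complex conjugate of V. Then the largest eigenvalue of Q Q^H satisfies (λ_max(Q Q^H))^{1/2} ≤ 2 (λ_max(W^{-1}))². -/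
open Matrix Kronecker
open scoped ComplexOrder

lemma aux_lamMax_sub {n : Type*} [Fintype n] [DecidableEq n]
    {A : Matrix n n ℂ} (hA : A.IsHermitian) :
    (((lamMax hA : ℝ) : ℂ) • (1 : Matrix n n ℂ) - A).PosSemidef := by
  have hd : (diagonal (fun i => ((lamMax hA : ℝ) : ℂ) - (hA.eigenvalues i : ℂ))).PosSemidef := by
    apply PosSemidef.diagonal
    intro i
    have : hA.eigenvalues i ≤ lamMax hA :=
      le_ciSup (f := hA.eigenvalues) (Set.finite_range _).bddAbove i
    simp only [Pi.zero_apply]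
    rw [← Complex.ofReal_sub]
    exact_mod_cast sub_nonneg.mpr this
  have h2 := hd.mul_mul_conjTranspose_same (hA.eigenvectorUnitary : Matrix n n ℂ)
  convert h2 using 1
  have hs := hA.spectral_theorem
  rw [Unitary.conjStarAlgAut_apply] at hs
  have hu : (hA.eigenvectorUnitary : Matrix n n ℂ) * (hA.eigenvectorUnitary : Matrix n n ℂ)ᴴ = 1 :=
    Unitary.coe_mul_star_self hA.eigenvectorUnitary
  have hd2 : diagonal (fun i => ((lamMax hA : ℝ) : ℂ) - (hA.eigenvalues i : ℂ))
      = ((lamMax hA : ℝ) : ℂ) • (1 : Matrix n n ℂ)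
        - diagonal (RCLike.ofReal ∘ hA.eigenvalues) := by
    rw [← diagonal_one, ← diagonal_smul, diagonal_sub]
    congr 1
    ext i
    simp
  rw [hd2, Matrix.mul_sub, Matrix.sub_mul, Matrix.mul_smul, Matrix.smul_mul, Matrix.mul_one, hu]
  congr 1

lemma aux_lamMax_le {n : Type*} [Fintype n] [DecidableEq n]
    {A : Matrix n n ℂ} (hA : A.IsHermitian) (c : ℝ) (hc : 0 ≤ c)
    (h : ((c : ℂ) • (1 : Matrix n n ℂ) - A).PosSemidef) : lamMax hA ≤ c := by
  refine Real.iSup_le (fun i => ?_) hc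
  have h1 := h.dotProduct_mulVec_nonneg (hA.eigenvectorBasis i)
  have hn : (star ⇑(hA.eigenvectorBasis i)) ⬝ᵥ ⇑(hA.eigenvectorBasis i) = (1 : ℂ) := by
    rw [dotProduct_comm, ← EuclideanSpace.inner_eq_star_dotProduct,
      inner_self_eq_norm_sq_to_K, hA.eigenvectorBasis.orthonormal.1 i]
    simp
  have h2 := hA.eigenvalues_eq i
  rw [sub_mulVec, dotProduct_sub, smul_mulVec, one_mulVec, dotProduct_smul, hn] at h1
  have h3 := (Complex.le_def.mp h1).1
  simp only [Complex.zero_re, Complex.sub_re, smul_eq_mul, mul_one, Complex.ofReal_re] at h3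
  rw [h2]
  exact sub_nonneg.mp h3

lemma aux_swap {m n : Type*} [Fintype m] [DecidableEq m] [Fintype n] [DecidableEq n]
    (C : Matrix m n ℂ) (c : ℝ) (hc : 0 < c)
    (h : ((c : ℂ) • (1 : Matrix n n ℂ) - Cᴴ * C).PosSemidef) :
    ((c : ℂ) • (1 : Matrix m m ℂ) - C * Cᴴ).PosSemidef := by
  have hH : ((c : ℂ) • (1 : Matrix m m ℂ) - C * Cᴴ)ᴴ = (c : ℂ) • (1 : Matrix m m ℂ) - C * Cᴴ := by
    simp [conjTranspose_smul]
  have h1 := posSemidef_self_mul_conjTranspose ((c : ℂ) • (1 : Matrix m m ℂ) - C * Cᴴ)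
  rw [hH] at h1
  have h2 := h1.add (h.mul_mul_conjTranspose_same C)
  have hc' : (0 : ℂ) ≤ ((c⁻¹ : ℝ) : ℂ) := by exact_mod_cast (inv_pos.mpr hc).le
  have h3 := h2.smul hc'
  convert h3 using 1
  have hne : (c : ℂ) ≠ 0 := by exact_mod_cast hc.ne'
  have : ((c : ℂ) • (1 : Matrix m m ℂ) - C * Cᴴ) * ((c : ℂ) • (1 : Matrix m m ℂ) - C * Cᴴ)
      + C * ((c : ℂ) • (1 : Matrix n n ℂ) - Cᴴ * C) * Cᴴ
      = (c : ℂ) • ((c : ℂ) • (1 : Matrix m m ℂ) - C * Cᴴ) := by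
    simp only [Matrix.mul_sub, Matrix.sub_mul, Matrix.mul_smul, Matrix.smul_mul, Matrix.mul_one, Matrix.one_mul,
      smul_sub, Matrix.mul_assoc]
    abel
  rw [this, smul_smul, Complex.ofReal_inv, inv_mul_cancel₀ hne, one_smul]

lemma aux_kron {m n : Type*} [Fintype m] [DecidableEq m] [Fintype n] [DecidableEq n]
    (X : Matrix m m ℂ) (Y : Matrix n n ℂ) (a b : ℝ) (hb : 0 ≤ b)
    (hX : X.PosSemidef)
    (hXa : ((a : ℂ) • (1 : Matrix m m ℂ) - X).PosSemidef)
    (hYb : ((b : ℂ) • (1 : Matrix n n ℂ) - Y).PosSemidef) :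
    (((a * b : ℝ) : ℂ) • (1 : Matrix (m × n) (m × n) ℂ) - X ⊗ₖ Y).PosSemidef := by
  have hb' : (0 : ℂ) ≤ (b : ℂ) := by exact_mod_cast hb
  have h1 := hXa.kronecker ((PosSemidef.one (n := n) (R := ℂ)).smul hb')
  have h2 := hX.kronecker hYb
  have he : ((a * b : ℝ) : ℂ) • (1 : Matrix (m × n) (m × n) ℂ) - X ⊗ₖ Y
      = ((a : ℂ) • (1 : Matrix m m ℂ) - X) ⊗ₖ ((b : ℂ) • (1 : Matrix n n ℂ))
        + X ⊗ₖ ((b : ℂ) • (1 : Matrix n n ℂ) - Y) := by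
   ext ⟨i, j⟩ ⟨k, l⟩
   simp only [Matrix.sub_apply, Matrix.add_apply, Matrix.smul_apply, kroneckerMap_apply, smul_eq_mul, one_apply,
    Prod.mk.injEq]
   push_cast
   by_cases h : i = k <;> by_cases h' : j = l <;> simp [h, h'] <;> ring
  rw [he]
  exact h1.add h2

lemma aux_cube {n : Type*} [Fintype n] [DecidableEq n]
    (P : Matrix n n ℂ) (c : ℝ) (hc : 0 ≤ c) (hP : P.PosSemidef)
    (h : ((c : ℂ) • (1 : Matrix n n ℂ) - P).PosSemidef) :
    (((c ^ 3 : ℝ) : ℂ) • (1 : Matrix n n ℂ) - P * P * P).PosSemidef := by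
  have hc' : (0 : ℂ) ≤ ((c ^ 2 : ℝ) : ℂ) := by exact_mod_cast sq_nonneg c
  have h1 := h.smul hc'
  have h2 := h.mul_mul_conjTranspose_same P
  have h3 := hP.mul_mul_conjTranspose_same ((c : ℂ) • (1 : Matrix n n ℂ) - P)
  rw [h.1.eq] at h3
  rw [hP.1.eq] at h2
  convert ((h1.add h2).add h2).add h3 using 1
  simp only [Matrix.mul_sub, Matrix.sub_mul, Matrix.mul_smul, Matrix.smul_mul, Matrix.mul_one, Matrix.one_mul,
      smul_sub, Matrix.mul_assoc, smul_smul]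
  push_cast
  module

lemma aux_posDef (M B : ℕ) (V : Matrix (Fin (M + 1)) (Fin B) ℂ)
    (hV : V.rank = M + 1) : (V * Vᴴ).PosDef := by
  apply PosDef.mul_conjTranspose_self
  rw [Matrix.vecMul_injective_iff, linearIndependent_iff_card_eq_finrank_span]
  rw [rank_eq_finrank_span_row] at hV
  rw [Fintype.card_fin, Set.finrank]
  exact hV.symm

lemma mul_kronecker_mul_aux {k l m n : Type*} [Fintype k] [Fintype l] [Fintype m] [Fintype n]
    (A : Matrix k l ℂ) (B : Matrix m n ℂ) :
    (A ⊗ₖ B) * (A ⊗ₖ B)ᴴ = (A * Aᴴ) ⊗ₖ (B * Bᴴ) := by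
  rw [conjTranspose_kronecker, mul_kronecker_mul]

/-- The off-diagonal Hessian block `Q` of `f(V) = Tr[(V Vᴴ)⁻¹]` satisfies
`λ_max(Q Qᴴ)^{1/2} ≤ 2 λ_max(W⁻¹)²`, where `W = V Vᴴ`. -/
theorem stmt5 (M B : ℕ) (V : Matrix (Fin (M + 1)) (Fin B) ℂ)
    (hV : V.rank = M + 1)
    (W : Matrix (Fin (M + 1)) (Fin (M + 1)) ℂ) (hW : W = V * Vᴴ)
    (Q : Matrix (Fin (M + 1) × Fin B) (Fin B × Fin (M + 1)) ℂ)
    (hQ : Q = ((W⁻¹ * W⁻¹)ᵀ * V.map (starRingEnd ℂ)) ⊗ₖ (Vᴴ * W⁻¹)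
        + ((W⁻¹)ᵀ * V.map (starRingEnd ℂ)) ⊗ₖ (Vᴴ * (W⁻¹ * W⁻¹))) :
    W.PosDef ∧
      ∃ (hQh : (Q * Qᴴ).IsHermitian) (hWi : (W⁻¹).IsHermitian),
        Real.sqrt (lamMax hQh) ≤ 2 * (lamMax hWi) ^ 2 := by
  have hWp : W.PosDef := hW ▸ aux_posDef M B V hV
  refine ⟨hWp, isHermitian_mul_conjTranspose_self Q, hWp.inv.1, ?_⟩
  have hPp := hWp.inv
  have hdet : IsUnit W.det := (isUnit_iff_isUnit_det _).mp hWp.isUnit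
  have hWP : W * W⁻¹ = 1 := mul_nonsing_inv _ hdet
  have hsub := aux_lamMax_sub hWp.inv.1
  have hl : 0 < lamMax hWp.inv.1 :=
    lt_of_lt_of_le (hWp.inv.eigenvalues_pos 0)
      (le_ciSup (f := hWp.inv.1.eigenvalues) (Set.finite_range _).bddAbove 0)
  generalize lamMax hWp.inv.1 = l at hsub hl
  generalize hPdef : W⁻¹ = P at *
  have hPH : Pᴴ = P := hPp.1.eq
  have hcube := aux_cube P l hl.le hPp.posSemidef hsub
  have hC1 : (Vᴴ * P)ᴴ * (Vᴴ * P) = P := by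
    rw [conjTranspose_mul, conjTranspose_conjTranspose, hPH, Matrix.mul_assoc,
      ← Matrix.mul_assoc V, ← hW, hWP, Matrix.mul_one]
  have hC2 : (Vᴴ * (P * P))ᴴ * (Vᴴ * (P * P)) = P * P * P := by
    rw [← Matrix.mul_assoc Vᴴ, conjTranspose_mul (Vᴴ * P), hPH, Matrix.mul_assoc P,
      ← Matrix.mul_assoc _ (Vᴴ * P) P, hC1, Matrix.mul_assoc]
  have hmap : V.map (starRingEnd ℂ) = (Vᴴ)ᵀ := by
    ext i j; simp [conjTranspose_apply]
  rw [hmap, ← transpose_mul, ← transpose_mul] at hQ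
  generalize hD1 : Vᴴ * P = C1 at *
  generalize hD2 : Vᴴ * (P * P) = C2 at *
  have hB1 := aux_swap C1 l hl (by rw [hC1]; exact hsub)
  have hB2 := aux_swap C2 (l ^ 3) (by positivity) (by rw [hC2]; exact hcube)
  have tr : ∀ C : Matrix (Fin B) (Fin (M + 1)) ℂ, C.transpose * C.transposeᴴ = (Cᴴ * C)ᵀ := by
    intro C
    rw [transpose_mul]; rfl
  have hA1 : ((l : ℂ) • (1 : Matrix (Fin (M + 1)) (Fin (M + 1)) ℂ)
      - C1.transpose * C1.transposeᴴ).PosSemidef := by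
    rw [tr, hC1]
    simpa using hsub.transpose
  have hA2 : (((l ^ 3 : ℝ) : ℂ) • (1 : Matrix (Fin (M + 1)) (Fin (M + 1)) ℂ)
      - C2.transpose * C2.transposeᴴ).PosSemidef := by
    rw [tr, hC2]
    simpa only [transpose_sub, transpose_smul, transpose_one] using hcube.transpose
  have hX := aux_kron _ _ _ _ hl.le (posSemidef_self_mul_conjTranspose C2.transpose) hA2 hB1
  have hY := aux_kron _ _ _ _ (by positivity) (posSemidef_self_mul_conjTranspose C1.transpose)
    hA1 hB2
  rw [← mul_kronecker_mul_aux] at hX hY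
  have hZ := posSemidef_self_mul_conjTranspose (C2.transpose ⊗ₖ C1 - C1.transpose ⊗ₖ C2)
  have hfin : (((4 * l ^ 4 : ℝ) : ℂ) • (1 : Matrix (Fin (M + 1) × Fin B) (Fin (M + 1) × Fin B) ℂ)
      - Q * Qᴴ).PosSemidef := by
    convert (((hX.add hX).add hY).add hY).add hZ using 1
    rw [hQ]
    simp only [conjTranspose_add, conjTranspose_sub, Matrix.mul_add, Matrix.add_mul,
      Matrix.mul_sub, Matrix.sub_mul]
    push_cast
    module
  have := aux_lamMax_le (isHermitian_mul_conjTranspose_self Q) _ (by positivity) hfin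
  apply Real.sqrt_le_iff.mpr
  refine ⟨by positivity, this.trans (le_of_eq (by ring))⟩
end

section
/- (Lemma 1) Let R be an n×n Hermitian positive semidefinite complex matrix, let c > 0, and let S and S_0 be n×m complex matrices. Then S_0^H R S_0 + c I_m and S^H R S + c I_m are invertible, and with Ξ_0 = (S_0^H R S_0 + c I_m)^{-1} S_0^H R it holds that − Tr[R S (S^H R S + c I_m)^{-1} S^H R] ≤ Tr[Ξ_0^H S^H R S Ξ_0] − 2 Re{Tr[Ξ_0 R S]} + c Tr[Ξ_0 Ξ_0^H]. -/
open Matrix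
open scoped ComplexOrder

/-- Lemma 1: the LMMSE objective surrogate. With `Ξ₀ = (S₀ᴴRS₀ + cI)⁻¹S₀ᴴR`,
`−Tr[RS(SᴴRS + cI)⁻¹SᴴR] ≤ Tr[Ξ₀ᴴSᴴRSΞ₀] − 2Re{Tr[Ξ₀RS]} + c·Tr[Ξ₀Ξ₀ᴴ]`. -/
theorem stmt9 (n m : ℕ) (R : Matrix (Fin n) (Fin n) ℂ) (hR : R.PosSemidef)
    (c : ℝ) (hc : 0 < c) (S S0 : Matrix (Fin n) (Fin m) ℂ)
    (Xi0 : Matrix (Fin m) (Fin n) ℂ)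
    (hXi0 : Xi0 = (S0ᴴ * R * S0 + (c : ℂ) • 1)⁻¹ * (S0ᴴ * R)) :
    IsUnit (S0ᴴ * R * S0 + (c : ℂ) • 1) ∧
    IsUnit (Sᴴ * R * S + (c : ℂ) • 1) ∧
    -(((R * S * (Sᴴ * R * S + (c : ℂ) • 1)⁻¹ * (Sᴴ * R)).trace).re) ≤
      ((Xi0ᴴ * (Sᴴ * R * S) * Xi0).trace).re - 2 * ((Xi0 * (R * S)).trace).re +
        c * ((Xi0 * Xi0ᴴ).trace).re := by
  have key : ∀ T : Matrix (Fin n) (Fin m) ℂ, (Tᴴ * R * T + (c : ℂ) • 1).PosDef := by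
    intro T
    refine Matrix.PosDef.posSemidef_add (hR.conjTranspose_mul_mul_same T) ?_
    exact Matrix.PosDef.one.smul (by exact_mod_cast hc)
  refine ⟨(key S0).isUnit, (key S).isUnit, ?_⟩
  clear hXi0
  have hA := key S
  have hdet := (Matrix.isUnit_iff_isUnit_det _).1 hA.isUnit
  have hAX : (Xi0ᴴ * (Sᴴ * R * S + (c : ℂ) • 1) * Xi0).trace
      = (Xi0ᴴ * (Sᴴ * R * S) * Xi0).trace + (c : ℂ) * (Xi0 * Xi0ᴴ).trace := by
    rw [Matrix.trace_mul_comm Xi0 Xi0ᴴ]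
    simp [Matrix.mul_add, Matrix.add_mul]
  have hB : (Sᴴ * R)ᴴ = R * S := by simp [hR.isHermitian.eq]
  generalize Sᴴ * R * S + (c : ℂ) • 1 = A at *
  generalize hBd : Sᴴ * R = B at *
  rw [← hB]
  have hAi : (A⁻¹)ᴴ = A⁻¹ := hA.isHermitian.inv.eq
  have h := (hA.posSemidef.conjTranspose_mul_mul_same (Xi0 - A⁻¹ * B)).trace_nonneg
  have e : (Xi0 - A⁻¹ * B)ᴴ * A * (Xi0 - A⁻¹ * B)
      = Xi0ᴴ * A * Xi0 - Xi0ᴴ * B - (Xi0ᴴ * B)ᴴ + Bᴴ * A⁻¹ * B := by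
    have h1 : A * (A⁻¹ * B) = B := Matrix.mul_nonsing_inv_cancel_left _ _ hdet
    have h2 : Bᴴ * A⁻¹ * A = Bᴴ := Matrix.nonsing_inv_mul_cancel_right _ _ hdet
    rw [Matrix.conjTranspose_sub, Matrix.conjTranspose_mul, hAi, Matrix.sub_mul, h2,
      Matrix.mul_sub, Matrix.sub_mul, Matrix.sub_mul, Matrix.mul_assoc Xi0ᴴ A (A⁻¹ * B), h1,
      Matrix.conjTranspose_mul, Matrix.conjTranspose_conjTranspose, Matrix.mul_assoc Bᴴ]
    abel
  have h3 : (Xi0 * Bᴴ).trace = star (Xi0ᴴ * B).trace := by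
    rw [← Matrix.trace_conjTranspose, Matrix.conjTranspose_mul,
      Matrix.conjTranspose_conjTranspose, Matrix.trace_mul_comm]
  rw [e, Matrix.trace_add, Matrix.trace_sub, Matrix.trace_sub, Matrix.trace_conjTranspose, hAX] at h
  rw [h3]
  have h4 := (Complex.le_def.1 h).1
  simp at h4 ⊢
  linarith
end

section
/- Let A and A_0 be n×n Hermitian positive definite complex matrices and let B and B_0 be m×n complex matrices. Then Tr[B A^{-1} B^H] ≥ 2 Re{Tr[A_0^{-1} B_0^H B]} − Tr[A_0^{-1} B_0^H B_0 A_0^{-1} A]. -/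
open Matrix
open scoped ComplexOrder

/-- First-order Taylor lower bound of the jointly convex function
`h(A, B) = Tr[B A⁻¹ Bᴴ]` at the point `(A₀, B₀)`. -/
theorem stmt10 (n m : ℕ) (A A0 : Matrix (Fin n) (Fin n) ℂ)
    (hA : A.PosDef) (hA0 : A0.PosDef)
    (B B0 : Matrix (Fin m) (Fin n) ℂ) :
    2 * ((A0⁻¹ * B0ᴴ * B).trace).re - ((A0⁻¹ * B0ᴴ * B0 * A0⁻¹ * A).trace).re ≤
      ((B * A⁻¹ * Bᴴ).trace).re := by
  have hu : IsUnit A.det := (Matrix.isUnit_iff_isUnit_det A).1 hA.isUnit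
  have hAh : Aᴴ = A := hA.isHermitian
  have hCh : (B0 * A0⁻¹)ᴴ = A0⁻¹ * B0ᴴ := by
    rw [conjTranspose_mul, hA0.inv.isHermitian.eq]
  have e2 : (A0⁻¹ * B0ᴴ * B0 * A0⁻¹ * A).trace
      = ((B0 * A0⁻¹) * A * (B0 * A0⁻¹)ᴴ).trace := by
    rw [hCh, Matrix.trace_mul_comm (B0 * A0⁻¹ * A)]
    simp only [Matrix.mul_assoc]
  have e1 : (A0⁻¹ * B0ᴴ * B).trace = (B * (B0 * A0⁻¹)ᴴ).trace := by
    rw [hCh, Matrix.trace_mul_comm B]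
  rw [e1, e2]
  generalize B0 * A0⁻¹ = C
  have h := (hA.inv.posSemidef.mul_mul_conjTranspose_same (B - C * A)).trace_nonneg
  have key : (B - C * A) * A⁻¹ * (B - C * A)ᴴ
      = B * A⁻¹ * Bᴴ - B * Cᴴ - (B * Cᴴ)ᴴ + C * A * Cᴴ := by
    have h1 : (B - C * A) * A⁻¹ = B * A⁻¹ - C := by
      rw [Matrix.sub_mul, Matrix.mul_nonsing_inv_cancel_right _ _ hu]
    have h2 : B * A⁻¹ * (A * Cᴴ) = B * Cᴴ := by
      rw [← Matrix.mul_assoc, Matrix.nonsing_inv_mul_cancel_right _ _ hu]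
    rw [h1, conjTranspose_sub, conjTranspose_mul, conjTranspose_mul, hAh,
      conjTranspose_conjTranspose, Matrix.sub_mul, Matrix.mul_sub, Matrix.mul_sub, h2,
      Matrix.mul_assoc C A]
    abel
  rw [key] at h
  have h3 := (Complex.le_def.1 h).1
  simp only [trace_add, trace_sub, trace_conjTranspose, Complex.add_re, Complex.sub_re,
    Complex.star_def, Complex.conj_re, Complex.zero_re] at h3
  linarith
end

section
/- The function h(A, B) = Re{Tr[B A^{-1} B^H]} is convex (with respect to the real vector space structure) on the convex set {(A, B) : A is an n×n Hermitian positive definite complex matrix, B is an arbitrary m×n complex matrix}. -/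
open Matrix
open scoped ComplexOrder

theorem aux_psd {n m : ℕ} {A : Matrix (Fin n) (Fin n) ℂ} (B : Matrix (Fin m) (Fin n) ℂ)
    (hA : A.PosDef) : (fromBlocks A Bᴴ B (B * A⁻¹ * Bᴴ)).PosSemidef := by
  haveI := hA.isUnit.invertible
  have h := (PosDef.fromBlocks₁₁ Bᴴ (B * A⁻¹ * Bᴴ) hA).2
    (by simpa using PosSemidef.zero)
  simpa using h

theorem aux_smul {k : Type*} [Fintype k] {A : Matrix k k ℂ} {a : ℝ} (ha : 0 ≤ a)
    (hA : A.PosSemidef) : (a • A).PosSemidef := hA.smul ha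

theorem aux_comb {n : ℕ} {A C : Matrix (Fin n) (Fin n) ℂ} {a b : ℝ} (ha : 0 < a) (hb : 0 < b)
    (hA : A.PosDef) (hC : C.PosDef) : (a • A + b • C).PosDef :=
  (hA.smul ha).add (hC.smul hb)

/-- The function `h(A, B) = Re{Tr[B A⁻¹ Bᴴ]}` is jointly convex on the set of
pairs `(A, B)` with `A` Hermitian positive definite. -/
theorem stmt11 (n m : ℕ) :
    ConvexOn ℝ
      {p : Matrix (Fin n) (Fin n) ℂ × Matrix (Fin m) (Fin n) ℂ | p.1.PosDef}
      (fun p => ((p.2 * p.1⁻¹ * p.2ᴴ).trace).re) := by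
  rw [convexOn_iff_forall_pos]
  constructor
  · rw [convex_iff_forall_pos]
    intro p hp q hq a b ha hb _
    exact aux_comb ha hb hp hq
  · rintro ⟨A, B⟩ hA ⟨C, D⟩ hC a b ha hb _
    simp only [Set.mem_setOf_eq] at hA hC
    have hE := aux_comb ha hb hA hC
    have hs := (aux_smul ha.le (aux_psd B hA)).add (aux_smul hb.le (aux_psd D hC))
    rw [fromBlocks_smul, fromBlocks_smul, fromBlocks_add] at hs
    haveI := hE.isUnit.invertible
    have hst : a • B + b • D = (a • Bᴴ + b • Dᴴ)ᴴ := by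
      simp [conjTranspose_add, conjTranspose_smul]
    have hst2 : (a • B + b • D)ᴴ = a • Bᴴ + b • Dᴴ := by
      simp [conjTranspose_add, conjTranspose_smul]
    rw [hst] at hs
    have h := ((PosDef.fromBlocks₁₁ _ _ hE).1 hs).trace_nonneg
    rw [← hst] at h
    have h2 := (Complex.le_def.1 h).1
    simp only [trace_sub, trace_add, trace_smul, Complex.sub_re, Complex.add_re,
      Complex.smul_re, Complex.zero_re] at h2
    simp only [Prod.smul_mk, Prod.mk_add_mk, hst2]
    linarith
end

section
/- (Appendix Lemma 2) Let A be an N×N Hermitian positive definite complex matrix (N ≥ 1) and set a = Tr[A^{-1}] (so a > 0). Then Tr[(I_N + A)^{-1}] ≤ N·a/(N + a), and equality holds if A = (N/a)·I_N. -/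
open Matrix
open scoped ComplexOrder

theorem trace_inv_aux (N : ℕ) (A : Matrix (Fin N) (Fin N) ℂ)
    (hA : A.PosDef) (t : ℝ) (ht : 0 ≤ t) :
    ((((t : ℂ) • 1 + A)⁻¹).trace).re = ∑ i, 1 / (t + hA.isHermitian.eigenvalues i) := by
  set l := hA.isHermitian.eigenvalues with hl
  have hpos : ∀ i, 0 < l i := fun i => hA.eigenvalues_pos i
  obtain ⟨U, V, hUV, hVU, hAU⟩ : ∃ U V : Matrix (Fin N) (Fin N) ℂ, U * V = 1 ∧ V * U = 1 ∧
      A = U * diagonal (fun i => (l i : ℂ)) * V := by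
    refine ⟨hA.isHermitian.eigenvectorUnitary, star (hA.isHermitian.eigenvectorUnitary : Matrix (Fin N) (Fin N) ℂ), ?_, ?_, ?_⟩
    · exact Unitary.coe_mul_star_self _
    · exact Unitary.coe_star_mul_self _
    · exact hA.isHermitian.spectral_theorem
  have h1 : ((t : ℂ) • 1 + A)⁻¹ = U * diagonal (fun i => ((1 / (t + l i) : ℝ) : ℂ)) * V := by
    apply Matrix.inv_eq_right_inv
    have h2 : (t : ℂ) • 1 + A = U * diagonal (fun i => ((t + l i : ℝ) : ℂ)) * V := by
      have h3 : (diagonal (fun i => ((t + l i : ℝ) : ℂ)) : Matrix (Fin N) (Fin N) ℂ)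
          = (t : ℂ) • 1 + diagonal (fun i => (l i : ℂ)) := by
        rw [← diagonal_one, ← diagonal_smul, diagonal_add]
        congr 1; ext i; simp
      rw [h3, mul_add, add_mul, ← hAU]
      simp [hUV]
    rw [h2]
    calc _ = U * diagonal (fun i => ((t + l i : ℝ) : ℂ)) * (V * U) *
          diagonal (fun i => ((1 / (t + l i) : ℝ) : ℂ)) * V := by simp only [mul_assoc]
      _ = U * (diagonal (fun i => ((t + l i : ℝ) : ℂ)) *
          diagonal (fun i => ((1 / (t + l i) : ℝ) : ℂ))) * V := by
            rw [hVU]; simp only [mul_assoc, one_mul]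
      _ = 1 := by
        rw [diagonal_mul_diagonal]
        have : (fun i => ((t + l i : ℝ) : ℂ) * ((1 / (t + l i) : ℝ) : ℂ)) = fun _ => 1 := by
          ext i
          have := hpos i
          rw [← Complex.ofReal_mul, mul_one_div_cancel (by positivity), Complex.ofReal_one]
        rw [this, diagonal_one, mul_one, hUV]
  rw [h1, trace_mul_comm, ← mul_assoc, hVU, one_mul, trace_diagonal, Complex.re_sum]
  rfl

/-- Appendix Lemma 2: for Hermitian positive definite `A` with `a = Tr[A⁻¹]`,
`Tr[(I + A)⁻¹] ≤ N·a/(N + a)`, with equality if `A = (N/a)·I`. -/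
theorem stmt15 (N : ℕ) (hN : 1 ≤ N) (A : Matrix (Fin N) (Fin N) ℂ)
    (hA : A.PosDef) (a : ℝ) (ha : a = ((A⁻¹).trace).re) :
    (((1 + A)⁻¹).trace).re ≤ (N : ℝ) * a / ((N : ℝ) + a) ∧
      (A = (((N : ℝ) / a : ℝ) : ℂ) • 1 →
        (((1 + A)⁻¹).trace).re = (N : ℝ) * a / ((N : ℝ) + a)) := by
  have e0 := trace_inv_aux N A hA 0 le_rfl
  have e1 := trace_inv_aux N A hA 1 zero_le_one
  have hpos : ∀ i, 0 < hA.isHermitian.eigenvalues i := fun i => hA.eigenvalues_pos i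
  simp only [Complex.ofReal_zero, zero_smul, zero_add, Complex.ofReal_one, one_smul] at e0 e1
  rw [← ha] at e0
  have hNpos : (0 : ℝ) < N := by exact_mod_cast hN
  have hapos : 0 < a := by
    rw [e0]
    exact Finset.sum_pos (fun i _ => one_div_pos.2 (hpos i)) ⟨⟨0, hN⟩, Finset.mem_univ _⟩
  constructor
  · rw [e1]
    have key : ∀ i, 1 / (1 + hA.isHermitian.eigenvalues i) ≤
        a / (N + a) + (N / (N + a)) ^ 2 * (1 / hA.isHermitian.eigenvalues i - a / N) := by
      intro i
      have hx := hpos i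
      generalize hA.isHermitian.eigenvalues i = x at hx
      have : a / (N + a) + (N / (N + a)) ^ 2 * (1 / x - a / N) - 1 / (1 + x)
          = (N - a * x) ^ 2 / ((N + a) ^ 2 * x * (1 + x)) := by
        field_simp
        ring
      have h2 : 0 ≤ (N - a * x) ^ 2 / ((N + a) ^ 2 * x * (1 + x)) := by positivity
      linarith
    refine (Finset.sum_le_sum fun i _ => key i).trans (le_of_eq ?_)
    rw [Finset.sum_add_distrib, ← Finset.mul_sum, Finset.sum_sub_distrib, ← e0]
    simp only [Finset.sum_const, Finset.card_univ, Fintype.card_fin, nsmul_eq_mul]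
    field_simp
    ring
  · intro h
    have : (1 + A)⁻¹ = ((a / (N + a) : ℝ) : ℂ) • (1 : Matrix (Fin N) (Fin N) ℂ) := by
      apply Matrix.inv_eq_right_inv
      have h2 : 1 + A = ((1 + N / a : ℝ) : ℂ) • (1 : Matrix (Fin N) (Fin N) ℂ) := by
        rw [h, Complex.ofReal_add, add_smul, Complex.ofReal_one, one_smul]
      rw [h2, smul_mul_smul_comm, one_mul, ← Complex.ofReal_mul]
      have h3 : (1 + N / a) * (a / (N + a)) = 1 := by
        field_simp
        ring
      rw [h3, Complex.ofReal_one, one_smul]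
    rw [this, trace_smul, trace_one, Fintype.card_fin, smul_eq_mul, Complex.re_ofReal_mul,
      Complex.natCast_re]
    ring
end

section
/- Let Ω be an N×N Hermitian positive definite complex matrix (N ≥ 1) and let c > 0. If Tr[Ω^{-1}] > N/c, then Tr[(I_N + Ω)^{-1}] > 0 and Tr[Ω^{-1}] / Tr[(I_N + Ω)^{-1}] > (1 + c)/c. -/
open Matrix
open scoped ComplexOrder

lemma aux_trace {N : ℕ} (Ω : Matrix (Fin N) (Fin N) ℂ)
    (hΩ : Ω.PosDef) (a : ℝ) (ha : 0 ≤ a) :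
    ((((a : ℂ) • (1 : Matrix (Fin N) (Fin N) ℂ) + Ω)⁻¹).trace).re
      = ∑ i, 1 / (a + hΩ.1.eigenvalues i) := by
  set U : Matrix (Fin N) (Fin N) ℂ := (hΩ.1.eigenvectorUnitary : Matrix (Fin N) (Fin N) ℂ) with hU
  have h1 : star U * U = 1 := Unitary.coe_star_mul_self _
  have h2 : U * star U = 1 := Unitary.coe_mul_star_self _
  set l := hΩ.1.eigenvalues with hl
  have hpos : ∀ i, 0 < l i := hΩ.eigenvalues_pos
  have hs : Ω = U * diagonal (fun i => ((l i : ℝ) : ℂ)) * star U := by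
    have := hΩ.1.spectral_theorem
    rw [Unitary.conjStarAlgAut_apply] at this
    exact this
  have hs2 : (a : ℂ) • (1 : Matrix (Fin N) (Fin N) ℂ) + Ω
      = U * diagonal (fun i => ((a + l i : ℝ) : ℂ)) * star U := by
    have hd : diagonal (fun i => ((a + l i : ℝ) : ℂ))
        = (a : ℂ) • (1 : Matrix (Fin N) (Fin N) ℂ) + diagonal (fun i => ((l i : ℝ) : ℂ)) := by
      rw [Matrix.smul_one_eq_diagonal, diagonal_add]
      simp
    rw [hd, mul_add, add_mul, ← hs]
    simp [h2]
  have hinv : ((a : ℂ) • (1 : Matrix (Fin N) (Fin N) ℂ) + Ω)⁻¹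
      = U * diagonal (fun i => ((1 / (a + l i) : ℝ) : ℂ)) * star U := by
    apply Matrix.inv_eq_right_inv
    rw [hs2]
    have hd : diagonal (fun i => ((a + l i : ℝ) : ℂ)) *
        diagonal (fun i => ((1 / (a + l i) : ℝ) : ℂ)) = 1 := by
      rw [diagonal_mul_diagonal, ← diagonal_one]
      congr 1
      funext i
      have : a + l i ≠ 0 := by have := hpos i; positivity
      rw [← Complex.ofReal_mul, mul_one_div_cancel this, Complex.ofReal_one]
    calc _ = U * diagonal (fun i => ((a + l i : ℝ) : ℂ)) * (star U * U) *
        diagonal (fun i => ((1 / (a + l i) : ℝ) : ℂ)) * star U := by simp only [mul_assoc]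
      _ = U * (diagonal (fun i => ((a + l i : ℝ) : ℂ)) *
        diagonal (fun i => ((1 / (a + l i) : ℝ) : ℂ))) * star U := by
          rw [h1]; simp only [mul_assoc, mul_one]
      _ = 1 := by rw [hd, mul_one, h2]
  rw [hinv, trace_mul_cycle, h1, one_mul, trace_diagonal, ← Complex.ofReal_sum, Complex.ofReal_re]

/-- If `Ω` is Hermitian positive definite with `Tr[Ω⁻¹] > N/c` for some `c > 0`,
then `Tr[(I + Ω)⁻¹] > 0` and `Tr[Ω⁻¹]/Tr[(I + Ω)⁻¹] > (1 + c)/c`. -/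
theorem stmt17 (N : ℕ) (hN : 1 ≤ N) (Ω : Matrix (Fin N) (Fin N) ℂ)
    (hΩ : Ω.PosDef) (c : ℝ) (hc : 0 < c)
    (h : (N : ℝ) / c < ((Ω⁻¹).trace).re) :
    0 < (((1 + Ω)⁻¹).trace).re ∧
      (1 + c) / c < ((Ω⁻¹).trace).re / (((1 + Ω)⁻¹).trace).re := by
  have e0 := aux_trace Ω hΩ 0 le_rfl
  have e1 := aux_trace Ω hΩ 1 zero_le_one
  simp only [Complex.ofReal_zero, zero_smul, zero_add] at e0
  simp only [Complex.ofReal_one, one_smul] at e1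
  have hpos : ∀ i, 0 < hΩ.1.eigenvalues i := hΩ.eigenvalues_pos
  have hS : 0 < (((1 + Ω)⁻¹).trace).re := by
    rw [e1]
    apply Finset.sum_pos
    · intro i _
      have := hpos i
      positivity
    · exact ⟨⟨0, hN⟩, Finset.mem_univ _⟩
  have hle : (1 + c) ^ 2 * (((1 + Ω)⁻¹).trace).re ≤ N + c ^ 2 * ((Ω⁻¹).trace).re := by
    have : (N : ℝ) = ∑ _i : Fin N, (1 : ℝ) := by simp
    rw [e0, e1, this, Finset.mul_sum, Finset.mul_sum, ← Finset.sum_add_distrib]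
    apply Finset.sum_le_sum
    intro i _
    have hi := hpos i
    generalize hΩ.1.eigenvalues i = x at hi
    have : 1 + c ^ 2 * (1 / x) - (1 + c) ^ 2 * (1 / (1 + x)) = (x - c) ^ 2 / (x * (1 + x)) := by
      field_simp
      ring
    have h3 : 0 ≤ (x - c) ^ 2 / (x * (1 + x)) := by positivity
    linarith
  refine ⟨hS, ?_⟩
  rw [div_lt_iff₀ hc] at h
  rw [div_lt_div_iff₀ hc hS]
  nlinarith
end
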